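/- arXiv:1412.0684 — 3 statements merged into one kernel-verified Lean document; each statement's English description precedes it below -/
import Mathlib

section
/- Let T be a finite tree on vertex set V rooted at a vertex r, and let w be a weight function for T with state matrix 𝓛(w). Then for every vertex i, the (i,r) entry of the d(i,r)-th power of 𝓛(w) equals the weight of the unique path from i to r: [𝓛(w)^{d(i,r)}]_{i,r} = 𝒲(P_{i,r}), the product of the weights w(u,v) over all edges uv of this path. In particular this entry is strictly positive. -/
/-!
If `M` is supported on the diagonal and the edges of `G`, then `(M ^ n) i r` is a sum over the
length-`n` walks from `i` to `r` that may also pause at a vertex, each pause contributing a diagonal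
entry. A walk with at least one pause makes fewer than `n` genuine steps, so for `n ≤ edist i r` it
cannot reach `r`: only walks of `G` itself contribute, and the diagonal plays no role. At
`n = dist i r` this is a sum over geodesics, and in a forest the only geodesic is the path from `i`
to `r`.
-/

open Finset

/-- A weight function for the simple graph `G`: symmetric, positive exactly on
adjacent pairs, zero otherwise (and zero on the diagonal). -/
def IsWeightFn {V : Type*} (G : SimpleGraph V) (w : V → V → ℝ) : Prop :=
  (∀ u v, w u v = w v u) ∧
  (∀ u v, G.Adj u v → 0 < w u v) ∧
  (∀ u v, u ≠ v → ¬ G.Adj u v → w u v = 0) ∧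
  (∀ v, w v v = 0)

/-- The state matrix `𝓛(w)` (the negative of the weighted Laplacian):
`[𝓛(w)]_{u,v} = w(u,v)` for `u ≠ v`, and `[𝓛(w)]_{v,v} = -∑_{u ≠ v} w(v,u)`. -/
def stateMatrix {V : Type*} [Fintype V] [DecidableEq V] (w : V → V → ℝ) :
    Matrix V V ℝ :=
  Matrix.of fun u v => if u = v then -(∑ x ∈ Finset.univ.erase v, w v x) else w u v

/-- The weight of a walk: the product of the edge weights along it. -/
def walkWeight {V : Type*} {G : SimpleGraph V} (w : V → V → ℝ) {i r : V}
    (p : G.Walk i r) : ℝ :=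
  (p.darts.map fun d => w d.toProd.1 d.toProd.2).prod

section Walks

variable {V : Type*} {G : SimpleGraph V}

theorem le_edist_of_adj_of_succ_le {u v x : V} {n : ℕ} (huv : G.Adj u v)
    (hn : ((n + 1 : ℕ) : ℕ∞) ≤ G.edist u x) : (n : ℕ∞) ≤ G.edist v x := by
  have htri : G.edist u x ≤ 1 + G.edist v x :=
    SimpleGraph.edist_eq_one_iff_adj.mpr huv ▸ SimpleGraph.edist_triangle
  rw [Nat.cast_add, Nat.cast_one, add_comm] at hn
  exact (ENat.add_le_add_iff_left ENat.one_ne_top).mp (hn.trans htri)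

variable [DecidableEq V] [G.LocallyFinite]

theorem finsetWalkLength_eq_empty_of_lt_edist {u v : V} {n : ℕ} (hn : n < G.edist u v) :
    G.finsetWalkLength n u v = ∅ := by
  refine Finset.eq_empty_of_forall_notMem fun p hp => hn.not_ge ?_
  rw [← SimpleGraph.mem_finsetWalkLength_iff.mp hp]
  exact p.edist_le

theorem sum_finsetWalkLength_succ {A : Type*} [AddCommMonoid A] {u v : V} (n : ℕ)
    (f : G.Walk u v → A) :
    ∑ p ∈ G.finsetWalkLength (n + 1) u v, f p =
      ∑ x : G.neighborSet u, ∑ q ∈ G.finsetWalkLength n x v, f (.cons x.2 q) := by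
  rw [SimpleGraph.finsetWalkLength, Finset.sum_biUnion]
  · simp only [Finset.sum_map]
    rfl
  · intro x _ y _ hxy
    refine Finset.disjoint_left.mpr fun p hpx hpy => hxy ?_
    obtain ⟨_, _, rfl⟩ := Finset.mem_map.mp hpx
    obtain ⟨_, _, hcons⟩ := Finset.mem_map.mp hpy
    injection hcons with _ hyx
    exact Subtype.ext hyx.symm

theorem finsetWalkLength_dist_eq_singleton (hG : G.IsAcyclic) {u v : V} {p : G.Walk u v}
    (hp : p.IsPath) : G.finsetWalkLength (G.dist u v) u v = {p} := by
  have eq_of_length_eq_dist (q : G.Walk u v) (hq : q.length = G.dist u v) : q = p :=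
    congrArg Subtype.val <| (hG.subsingleton_path u v).elim
      ⟨q, q.isPath_of_length_eq_dist hq⟩ ⟨p, hp⟩
  obtain ⟨q, hq⟩ := p.reachable.exists_walk_length_eq_dist
  obtain rfl := eq_of_length_eq_dist q hq
  ext s
  rw [SimpleGraph.mem_finsetWalkLength_iff, Finset.mem_singleton]
  exact ⟨eq_of_length_eq_dist s, fun hs => hs ▸ hq⟩

end Walks

section MatrixPowers

variable {V R : Type*} {G : SimpleGraph V}

/-- The ordered product of the entries `M u v` over the successive steps `u → v` of a walk. It is
`walkWeight` for matrices over an arbitrary monoid, so that powers of a matrix can be expanded into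
walks whatever its entries are. -/
def walkProd [Monoid R] (M : Matrix V V R) {u v : V} (p : G.Walk u v) : R :=
  (p.darts.map fun d => M d.fst d.snd).prod

@[simp]
theorem walkProd_nil [Monoid R] (M : Matrix V V R) (u : V) :
    walkProd M (.nil : G.Walk u u) = 1 := rfl

@[simp]
theorem walkProd_cons [Monoid R] (M : Matrix V V R) {u v x : V} (h : G.Adj u v) (p : G.Walk v x) :
    walkProd M (.cons h p) = M u v * walkProd M p := List.prod_cons

variable [Fintype V] [DecidableEq V] [G.LocallyFinite]

theorem matrix_pow_apply_eq_sum_walkProd [Semiring R] {M : Matrix V V R}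
    (hM : ∀ u v, u ≠ v → ¬ G.Adj u v → M u v = 0) {n : ℕ} {i r : V} (hn : n ≤ G.edist i r) :
    (M ^ n) i r = ∑ p ∈ G.finsetWalkLength n i r, walkProd M p := by
  induction n generalizing i with
  | zero => obtain rfl | hir := eq_or_ne i r <;> simp [SimpleGraph.finsetWalkLength, *]
  | succ n ih =>
    have hlt : (n : ℕ∞) < G.edist i r := (Nat.cast_lt.mpr n.lt_succ_self).trans_le hn
    have hdiag : (M ^ n) i r = 0 := by
      rw [ih hlt.le, finsetWalkLength_eq_empty_of_lt_edist hlt, Finset.sum_empty]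
    have hterm (j : V) (hj : j ∉ G.neighborFinset i) : M i j * (M ^ n) j r = 0 := by
      obtain rfl | hij := eq_or_ne i j
      · rw [hdiag, mul_zero]
      · rw [hM i j hij (mt (G.mem_neighborFinset i j).mpr hj), zero_mul]
    calc (M ^ (n + 1)) i r
        = ∑ j, M i j * (M ^ n) j r := by rw [pow_succ', Matrix.mul_apply]
      _ = ∑ j ∈ G.neighborFinset i, M i j * (M ^ n) j r :=
          (Finset.sum_subset (Finset.subset_univ _) fun j _ => hterm j).symm
      _ = ∑ j : G.neighborSet i, M i j * (M ^ n) j r :=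
          Finset.sum_subtype _ (G.mem_neighborFinset i) _
      _ = ∑ j : G.neighborSet i, ∑ q ∈ G.finsetWalkLength n j r, walkProd M (.cons j.2 q) := by
          refine Finset.sum_congr rfl fun j _ => ?_
          rw [ih (le_edist_of_adj_of_succ_le j.2 hn), Finset.mul_sum]
          exact Finset.sum_congr rfl fun q _ => (walkProd_cons M j.2 q).symm
      _ = ∑ p ∈ G.finsetWalkLength (n + 1) i r, walkProd M p :=
          (sum_finsetWalkLength_succ n _).symm

end MatrixPowers

section StateMatrix

variable {V : Type*} {G : SimpleGraph V} {w : V → V → ℝ}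

theorem walkWeight_pos (hpos : ∀ u v, G.Adj u v → 0 < w u v) {u v : V} (p : G.Walk u v) :
    0 < walkWeight w p := by
  refine List.prod_pos fun a ha => ?_
  obtain ⟨d, _, rfl⟩ := List.mem_map.mp ha
  exact hpos _ _ d.adj

variable [Fintype V] [DecidableEq V]

theorem stateMatrix_apply_of_ne (w : V → V → ℝ) {u v : V} (huv : u ≠ v) :
    stateMatrix w u v = w u v := if_neg huv

theorem walkProd_stateMatrix (w : V → V → ℝ) {u v : V} (p : G.Walk u v) :
    walkProd (stateMatrix w) p = walkWeight w p :=
  congrArg List.prod <| List.map_congr_left fun d _ => stateMatrix_apply_of_ne w d.adj.ne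

theorem stateMatrix_pow_dist_eq_sum_walkWeight [G.LocallyFinite]
    (hzero : ∀ u v, u ≠ v → ¬ G.Adj u v → w u v = 0) {i r : V} (hir : G.Reachable i r) :
    (stateMatrix w ^ G.dist i r) i r =
      ∑ p ∈ G.finsetWalkLength (G.dist i r) i r, walkWeight w p := by
  have hsupp (u v : V) (huv : u ≠ v) (hadj : ¬ G.Adj u v) : stateMatrix w u v = 0 :=
    (stateMatrix_apply_of_ne w huv).trans (hzero u v huv hadj)
  rw [matrix_pow_apply_eq_sum_walkProd hsupp hir.coe_dist_eq_edist.le]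
  exact Finset.sum_congr rfl fun p _ => walkProd_stateMatrix w p

theorem markov_entry_at_dist_eq_pathWeight_general [G.LocallyFinite] (hw : IsWeightFn G w)
    {i r : V} (hir : G.Reachable i r) :
    (stateMatrix w ^ G.dist i r) i r =
        ∑ p ∈ G.finsetWalkLength (G.dist i r) i r, walkWeight w p ∧
      0 < (stateMatrix w ^ G.dist i r) i r := by
  obtain ⟨-, hpos, hzero, -⟩ := hw
  have hsum := stateMatrix_pow_dist_eq_sum_walkWeight hzero hir
  obtain ⟨p, hp⟩ := hir.exists_walk_length_eq_dist
  refine ⟨hsum, hsum ▸ Finset.sum_pos (fun q _ => walkWeight_pos hpos q) ⟨p, ?_⟩⟩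
  exact SimpleGraph.mem_finsetWalkLength_iff.mpr hp

end StateMatrix

theorem markov_entry_at_dist_eq_pathWeight
    {V : Type*} [Fintype V] [DecidableEq V] (G : SimpleGraph V)
    (hT : G.IsTree) (r : V) (w : V → V → ℝ) (hw : IsWeightFn G w)
    (i : V) (p : G.Walk i r) (hp : p.IsPath) :
    (stateMatrix w ^ G.dist i r) i r = walkWeight w p ∧
    0 < (stateMatrix w ^ G.dist i r) i r := by
  classical
  simpa only [finsetWalkLength_dist_eq_singleton hT.isAcyclic hp, Finset.sum_singleton] using
    markov_entry_at_dist_eq_pathWeight_general hw p.reachable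
end

section
/- Let T be a finite tree on vertex set V rooted at a vertex r (the input node). Let S ⊆ V be a sensor set satisfying: r ∈ S, and for every vertex v of T, at most one child of v lies outside S (equivalently, S contains all but at most one member of every sibling group). Let w and w' be two weight functions for T (each symmetric, positive exactly on the edges of T, zero otherwise). If [𝓛(w)^k]_{s,r} = [𝓛(w')^k]_{s,r} for every s ∈ S and every natural number k, then w = w'. That is, the map from edge weights to the Markov parameters measured at the sensor nodes of Algorithm 1 is one-to-one. -/
open Finset

/-!
The Markov parameters `x_v(k) = [𝓛(w)^k]_{v,r}` satisfy the diffusion recurrence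
`x_v(k+1) = ∑_u w(v,u) (x_u(k) - x_v(k))`, whose terms are flows along the edges at `v`. On a tree
the impulse injected at `r` reaches `v` exactly at time `d(v,r)`, and its value there is the product
of the weights on the path from `r` to `v`. Hence the sequences `x` at the two ends of an edge
determine the weight of that edge.

It remains to recover the sequence at an unobserved vertex `c`, by induction on its depth. The
sequences at its parent `p` and at all other neighbours of `p` are known: the parent of `p` by
induction, the siblings of `c` because they carry sensors. So the recurrence at `p` isolates the
flow `w(p,c) (x_c(k) - x_p(k))` for every `k`. At `k = d(p,r)` we have `x_c(k) = 0`, so the flow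
reveals `w(p,c)`, and then the flows at the other times reveal `x_c`.
-/

section RootedGraph

variable {V : Type*} {G : SimpleGraph V} {r : V}

/-- `IsChild G r p c` says that `c` is a child of `p` (and `p` the parent of `c`) in the graph `G`
rooted at `r`. -/
structure IsChild (G : SimpleGraph V) (r p c : V) : Prop where
  adj : G.Adj p c
  dist_eq : G.dist c r = G.dist p r + 1

lemma dist_le_dist_add_one_of_adj {u v : V} (huv : G.Adj u v) (r : V) :
    G.dist u r ≤ G.dist v r + 1 := by
  have htriangle := huv.reachable.dist_triangle_left r
  rwa [SimpleGraph.dist_eq_one_iff_adj.mpr huv, add_comm] at htriangle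

lemma isChild_or_isChild_of_adj (hT : G.IsTree) (r : V) {u v : V} (huv : G.Adj u v) :
    IsChild G r u v ∨ IsChild G r v u := by
  have hdist := hT.dist_eq_dist_add_one_of_adj r huv
  rw [SimpleGraph.dist_comm (v := u), SimpleGraph.dist_comm (v := v)] at hdist
  exact hdist.symm.imp (⟨huv, ·⟩) (⟨huv.symm, ·⟩)

lemma exists_isChild_of_ne (hG : G.Connected) {v : V} (hvr : v ≠ r) : ∃ p, IsChild G r p v := by
  obtain ⟨geodesic, hlength⟩ := hG.exists_walk_length_eq_dist v r
  cases geodesic with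
  | nil => exact absurd rfl hvr
  | @cons _ p _ hvp tail =>
    have htail := SimpleGraph.dist_le tail
    rw [SimpleGraph.Walk.length_cons] at hlength
    exact ⟨p, hvp.symm, le_antisymm (dist_le_dist_add_one_of_adj hvp r) (by lia)⟩

lemma IsChild.exists_isPath_cons {p c : V} (hpc : IsChild G r p c) :
    ∃ walk : G.Walk p r, (SimpleGraph.Walk.cons hpc.adj.symm walk).IsPath := by
  have hcr : G.Reachable c r := .of_dist_ne_zero (by simp [hpc.dist_eq])
  obtain ⟨walk, hlength⟩ := (hpc.adj.reachable.trans hcr).exists_walk_length_eq_dist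
  exact ⟨walk, SimpleGraph.Walk.isPath_of_length_eq_dist _ (by simp [hlength, hpc.dist_eq])⟩

lemma IsChild.parent_unique (hG : G.IsAcyclic) {p q c : V} (hpc : IsChild G r p c)
    (hqc : IsChild G r q c) : p = q := by
  obtain ⟨walk_p, hwalk_p⟩ := hpc.exists_isPath_cons
  obtain ⟨walk_q, hwalk_q⟩ := hqc.exists_isPath_cons
  have hpath := (hG.subsingleton_path c r).elim ⟨_, hwalk_p⟩ ⟨_, hwalk_q⟩
  simpa using congrArg (fun path => path.1.snd) hpath

end RootedGraph

section MarkovParam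

variable {V R : Type*} [DecidableEq V] [Ring R] {G : SimpleGraph V} [G.LocallyFinite]
  {w w' : V → V → R} {r : V}

/-- The Markov parameter `[𝓛(w)^k]_{v,r}`, the response at `v` after `k` steps to a unit impulse at
`r`. It is defined by the diffusion recurrence over the neighbours of `v`, rather than as an entry
of a matrix power, so that it makes sense on infinite locally finite graphs. -/
def markovParam (G : SimpleGraph V) [G.LocallyFinite] (w : V → V → R) (r : V) : ℕ → V → R
  | 0 => Pi.single r 1
  | k + 1 => fun v => ∑ u ∈ G.neighborFinset v,
      w v u * (markovParam G w r k u - markovParam G w r k v)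

/-- The flow into `v` along the edge `uv` at time `k`: the contribution of the neighbour `u` to the
diffusion recurrence at `v`. -/
def edgeFlow (G : SimpleGraph V) [G.LocallyFinite] (w : V → V → R) (r : V) (k : ℕ) (v u : V) : R :=
  w v u * (markovParam G w r k u - markovParam G w r k v)

lemma markovParam_succ (k : ℕ) (v : V) :
    markovParam G w r (k + 1) v = ∑ u ∈ G.neighborFinset v, edgeFlow G w r k v u :=
  rfl

lemma markovParam_eq_zero_of_lt_dist {k : ℕ} {v : V} (hk : k < G.dist v r) :
    markovParam G w r k v = 0 := by
  induction k generalizing v with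
  | zero =>
    have hvr : v ≠ r := by rintro rfl; simp at hk
    exact Pi.single_eq_of_ne hvr 1
  | succ k ih =>
    rw [markovParam_succ]
    refine Finset.sum_eq_zero fun u hu => ?_
    have hdist := dist_le_dist_add_one_of_adj ((G.mem_neighborFinset v u).mp hu) r
    rw [edgeFlow, ih (by lia : k < G.dist u r), ih (by lia : k < G.dist v r), sub_zero, mul_zero]

lemma IsChild.markovParam_dist (hG : G.IsAcyclic) {p c : V} (hpc : IsChild G r p c) :
    markovParam G w r (G.dist c r) c = w c p * markovParam G w r (G.dist p r) p := by
  have hc : markovParam G w r (G.dist p r) c = 0 :=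
    markovParam_eq_zero_of_lt_dist (by simp [hpc.dist_eq])
  have hother : ∀ u ∈ G.neighborFinset c, u ≠ p → edgeFlow G w r (G.dist p r) c u = 0 := by
    intro u hu hup
    have hcu : G.Adj c u := (G.mem_neighborFinset c u).mp hu
    have hnot_parent : G.dist c r ≠ G.dist u r + 1 := fun hdist =>
      hup (IsChild.parent_unique hG ⟨hcu.symm, hdist⟩ hpc)
    have hlt : G.dist p r < G.dist u r := by
      have := dist_le_dist_add_one_of_adj hcu r
      have := hpc.dist_eq
      lia
    rw [edgeFlow, hc, markovParam_eq_zero_of_lt_dist hlt, sub_zero, mul_zero]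
  rw [hpc.dist_eq, markovParam_succ, Finset.sum_eq_single p hother
    fun hp => absurd ((G.mem_neighborFinset c p).mpr hpc.adj.symm) hp, edgeFlow, hc, sub_zero]

lemma edgeFlow_eq_of_forall_adj_ne {k : ℕ} {v u : V} (hvu : G.Adj v u)
    (hv : markovParam G w r (k + 1) v = markovParam G w' r (k + 1) v)
    (hother : ∀ x, G.Adj v x → x ≠ u → edgeFlow G w r k v x = edgeFlow G w' r k v x) :
    edgeFlow G w r k v u = edgeFlow G w' r k v u := by
  have hmem := (G.mem_neighborFinset v u).mpr hvu
  have hsum : ∑ x ∈ (G.neighborFinset v).erase u, edgeFlow G w r k v x =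
      ∑ x ∈ (G.neighborFinset v).erase u, edgeFlow G w' r k v x :=
    Finset.sum_congr rfl fun x hx => hother x
      ((G.mem_neighborFinset v x).mp (Finset.mem_of_mem_erase hx)) (Finset.ne_of_mem_erase hx)
  rw [markovParam_succ, markovParam_succ, ← Finset.add_sum_erase _ _ hmem,
    ← Finset.add_sum_erase _ _ hmem, hsum] at hv
  exact add_right_cancel hv

variable [IsDomain R]

lemma markovParam_dist_ne_zero (hT : G.IsTree) (hne : ∀ u v, G.Adj u v → w u v ≠ 0) (v : V) :
    markovParam G w r (G.dist v r) v ≠ 0 := by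
  induction hn : G.dist v r generalizing v with
  | zero =>
    obtain rfl := hT.connected.dist_eq_zero_iff.mp hn
    simp [markovParam]
  | succ n ih =>
    have hvr : v ≠ r := by rintro rfl; simp at hn
    obtain ⟨p, hpv⟩ := exists_isChild_of_ne hT.connected hvr
    have hp : G.dist p r = n := by have := hpv.dist_eq; lia
    rw [← hn, hpv.markovParam_dist hT.isAcyclic, hp]
    exact mul_ne_zero (hne _ _ hpv.adj.symm) (ih p hp)

lemma IsChild.weight_eq (hT : G.IsTree) (hne : ∀ u v, G.Adj u v → w u v ≠ 0) {p c : V}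
    (hpc : IsChild G r p c)
    (hp : markovParam G w r (G.dist p r) p = markovParam G w' r (G.dist p r) p)
    (hc : markovParam G w r (G.dist c r) c = markovParam G w' r (G.dist c r) c) :
    w c p = w' c p := by
  rw [hpc.markovParam_dist hT.isAcyclic, hpc.markovParam_dist hT.isAcyclic, ← hp] at hc
  exact mul_right_cancel₀ (markovParam_dist_ne_zero hT hne p) hc

lemma IsChild.markovParam_eq_of_edgeFlow_eq (hT : G.IsTree)
    (hne : ∀ u v, G.Adj u v → w u v ≠ 0) {p c : V} (hpc : IsChild G r p c)
    (hp : ∀ k, markovParam G w r k p = markovParam G w' r k p)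
    (hflow : ∀ k, edgeFlow G w r k p c = edgeFlow G w' r k p c) (k : ℕ) :
    markovParam G w r k c = markovParam G w' r k c := by
  simp only [edgeFlow, ← hp] at hflow
  have hweight : w p c = w' p c := by
    have hlt : G.dist p r < G.dist c r := by simp [hpc.dist_eq]
    have hfirst := hflow (G.dist p r)
    rw [markovParam_eq_zero_of_lt_dist hlt, markovParam_eq_zero_of_lt_dist hlt, zero_sub] at hfirst
    exact mul_right_cancel₀ (neg_ne_zero.mpr (markovParam_dist_ne_zero hT hne p)) hfirst
  have hk := hflow k
  rw [← hweight] at hk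
  exact sub_left_injective (mul_left_cancel₀ (hne p c hpc.adj) hk)

lemma weight_eq_of_adj (hT : G.IsTree) (hsymm : ∀ u v, w u v = w v u)
    (hsymm' : ∀ u v, w' u v = w' v u) (hne : ∀ u v, G.Adj u v → w u v ≠ 0) {u v : V}
    (huv : G.Adj u v) (hu : ∀ k, markovParam G w r k u = markovParam G w' r k u)
    (hv : ∀ k, markovParam G w r k v = markovParam G w' r k v) : w u v = w' u v := by
  rcases isChild_or_isChild_of_adj hT r huv with hchild | hchild
  · rw [hsymm, hsymm', hchild.weight_eq hT hne (hu _) (hv _)]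
  · exact hchild.weight_eq hT hne (hv _) (hu _)

lemma IsChild.markovParam_eq_of_forall_adj_ne (hT : G.IsTree) (hsymm : ∀ u v, w u v = w v u)
    (hsymm' : ∀ u v, w' u v = w' v u) (hne : ∀ u v, G.Adj u v → w u v ≠ 0) {p c : V}
    (hpc : IsChild G r p c) (hp : ∀ k, markovParam G w r k p = markovParam G w' r k p)
    (hother : ∀ u, G.Adj p u → u ≠ c → ∀ k, markovParam G w r k u = markovParam G w' r k u) :
    ∀ k, markovParam G w r k c = markovParam G w' r k c := by
  refine hpc.markovParam_eq_of_edgeFlow_eq hT hne hp fun k =>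
    edgeFlow_eq_of_forall_adj_ne hpc.adj (hp (k + 1)) fun u hpu huc => ?_
  have hu := hother u hpu huc
  rw [edgeFlow, edgeFlow, weight_eq_of_adj hT hsymm hsymm' hne hpu hp hu, hp, hu]

lemma markovParam_eq_of_eq_on_sensors (hT : G.IsTree) {S : Set V} (hrS : r ∈ S)
    (hS : ∀ v c₁ c₂, IsChild G r v c₁ → IsChild G r v c₂ → c₁ ∉ S → c₂ ∉ S → c₁ = c₂)
    (hsymm : ∀ u v, w u v = w v u) (hsymm' : ∀ u v, w' u v = w' v u)
    (hne : ∀ u v, G.Adj u v → w u v ≠ 0)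
    (h : ∀ s ∈ S, ∀ k, markovParam G w r k s = markovParam G w' r k s) (v : V) :
    ∀ k, markovParam G w r k v = markovParam G w' r k v := by
  induction hn : G.dist v r using Nat.strong_induction_on generalizing v with
  | _ n ih =>
    by_cases hvS : v ∈ S
    · exact h v hvS
    obtain ⟨p, hpv⟩ := exists_isChild_of_ne hT.connected (ne_of_mem_of_not_mem hrS hvS).symm
    have hpn : G.dist p r < n := by have := hpv.dist_eq; lia
    refine hpv.markovParam_eq_of_forall_adj_ne hT hsymm hsymm' hne (ih _ hpn p rfl)
      fun u hpu huv => ?_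
    rcases isChild_or_isChild_of_adj hT r hpu with hsibling | hgrandparent
    · exact h u (by_contra fun huS => huv (hS p u v hsibling hpv huS hvS))
    · exact ih _ (by have := hgrandparent.dist_eq; lia) u rfl

theorem sensor_placement_identifiability_general (hT : G.IsTree) {S : Set V} (hrS : r ∈ S)
    (hS : ∀ v c₁ c₂, IsChild G r v c₁ → IsChild G r v c₂ → c₁ ∉ S → c₂ ∉ S → c₁ = c₂)
    (hsymm : ∀ u v, w u v = w v u) (hsymm' : ∀ u v, w' u v = w' v u)
    (hne : ∀ u v, G.Adj u v → w u v ≠ 0)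
    (h : ∀ s ∈ S, ∀ k, markovParam G w r k s = markovParam G w' r k s) {u v : V}
    (huv : G.Adj u v) : w u v = w' u v :=
  have hall := markovParam_eq_of_eq_on_sensors hT hrS hS hsymm hsymm' hne h
  weight_eq_of_adj hT hsymm hsymm' hne huv (hall u) (hall v)

end MarkovParam

section StateMatrix

variable {V : Type*} {G : SimpleGraph V} {w w' : V → V → ℝ}

lemma IsWeightFn.eq_of_forall_adj (hw : IsWeightFn G w) (hw' : IsWeightFn G w')
    (h : ∀ u v, G.Adj u v → w u v = w' u v) : w = w' := by
  obtain ⟨-, -, hzero, hdiag⟩ := hw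
  obtain ⟨-, -, hzero', hdiag'⟩ := hw'
  funext u v
  by_cases huv : G.Adj u v
  · exact h u v huv
  obtain rfl | hne := eq_or_ne u v
  · rw [hdiag, hdiag']
  · rw [hzero u v hne huv, hzero' u v hne huv]

variable [Fintype V] [DecidableEq V]

lemma stateMatrix_mulVec_apply (w : V → V → ℝ) (x : V → ℝ) (v : V) :
    (stateMatrix w).mulVec x v = ∑ u, w v u * (x u - x v) := by
  have hoff : ∀ u ∈ univ.erase v, stateMatrix w v u * x u = w v u * x u := fun u hu => by
    simp [stateMatrix, (ne_of_mem_erase hu).symm]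
  rw [Matrix.mulVec, dotProduct, ← add_sum_erase _ _ (mem_univ v), sum_congr rfl hoff,
    ← add_sum_erase _ _ (mem_univ v)]
  simp only [stateMatrix, Matrix.of_apply, if_true, sub_self, mul_zero, mul_sub, sum_sub_distrib,
    ← sum_mul]
  ring

lemma stateMatrix_pow_apply [DecidableRel G.Adj]
    (hw : ∀ u v, u ≠ v → ¬ G.Adj u v → w u v = 0) (k : ℕ) (v r : V) :
    (stateMatrix w ^ k) v r = markovParam G w r k v := by
  induction k generalizing v with
  | zero => rw [pow_zero, Matrix.one_apply, markovParam, Pi.single_apply]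
  | succ k ih =>
    have hnonadj : ∀ u, u ∉ G.neighborFinset v →
        w v u * (markovParam G w r k u - markovParam G w r k v) = 0 := fun u hu => by
      obtain rfl | hvu := eq_or_ne v u
      · rw [sub_self, mul_zero]
      · rw [hw v u hvu (by rwa [SimpleGraph.mem_neighborFinset] at hu), zero_mul]
    calc (stateMatrix w ^ (k + 1)) v r
        = (stateMatrix w).mulVec (fun u => (stateMatrix w ^ k) u r) v := by
          rw [pow_succ', Matrix.mul_apply, Matrix.mulVec, dotProduct]
      _ = ∑ u, w v u * (markovParam G w r k u - markovParam G w r k v) := by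
          simp only [stateMatrix_mulVec_apply, ih]
      _ = markovParam G w r (k + 1) v :=
          (sum_subset (subset_univ _) fun u _ => hnonadj u).symm

end StateMatrix

theorem sensor_placement_identifiability
    {V : Type*} [Fintype V] [DecidableEq V] (G : SimpleGraph V)
    (hT : G.IsTree) (r : V) (S : Set V) (hrS : r ∈ S)
    (hS : ∀ v c₁ c₂ : V,
      G.Adj v c₁ → G.dist c₁ r = G.dist v r + 1 →
      G.Adj v c₂ → G.dist c₂ r = G.dist v r + 1 →
      c₁ ∉ S → c₂ ∉ S → c₁ = c₂)
    (w w' : V → V → ℝ) (hw : IsWeightFn G w) (hw' : IsWeightFn G w')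
    (h : ∀ s ∈ S, ∀ k : ℕ, (stateMatrix w ^ k) s r = (stateMatrix w' ^ k) s r) :
    w = w' := by
  classical
  refine hw.eq_of_forall_adj hw' fun u v =>
    sensor_placement_identifiability_general hT hrS
      (fun v c₁ c₂ h₁ h₂ => hS v c₁ c₂ h₁.adj h₁.dist_eq h₂.adj h₂.dist_eq)
      hw.1 hw'.1 (fun u v huv => (hw.2.1 u v huv).ne') fun s hs k => ?_
  rw [← stateMatrix_pow_apply hw.2.2.1, ← stateMatrix_pow_apply hw'.2.2.1, h s hs k]
end

section
/- Let T be the star graph on vertex set V with center c and leaves v_1, …, v_{n−1}, with input at the center c. Let S ⊆ V and suppose there are two distinct leaves u and v with u ∉ S and v ∉ S. Let w be any weight function for T and let w' be the weight function obtained from w by swapping the weights of the edges cu and cv (w'(c,u) = w(c,v), w'(c,v) = w(c,u), and w' = w on all other pairs). Then [𝓛(w)^k]_{s,c} = [𝓛(w')^k]_{s,c} for every s ∈ S and every natural number k; hence if w(c,u) ≠ w(c,v), the two distinct weight functions w and w' are indistinguishable from the measurements at S. -/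
/-!
In a star the leaves `u` and `v` are adjacent only to the center `c`, so swapping the weights of
`cu` and `cv` amounts to relabelling the vertices by the transposition `σ = (u v)`. Relabelling
permutes the rows and columns of `𝓛(w)`, and hence those of all its powers, by `σ`. Since `σ` fixes
`c` and every sensor, the measured entries do not change.
-/

open Finset

section VertexRelabelling

variable {V W : Type*} [Fintype V] [DecidableEq V] [Fintype W] [DecidableEq W]

theorem submatrix_equiv_pow {R : Type*} [Semiring R] (M : Matrix V V R) (e : W ≃ V) (k : ℕ) :
    M.submatrix e e ^ k = (M ^ k).submatrix e e :=
  (map_pow (Matrix.reindexRingEquiv R e.symm) M k).symm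

theorem sum_univ_erase_comp_equiv {M : Type*} [AddCommMonoid M] (f : V → M) (e : W ≃ V) (a : W) :
    ∑ x ∈ univ.erase a, f (e x) = ∑ x ∈ univ.erase (e a), f x :=
  sum_equiv e (by simp) fun _ _ => rfl

theorem stateMatrix_comp_equiv (w : V → V → ℝ) (e : W ≃ V) :
    stateMatrix (fun a b => w (e a) (e b)) = (stateMatrix w).submatrix e e := by
  ext a b
  simp only [stateMatrix, Matrix.of_apply, Matrix.submatrix_apply, e.injective.eq_iff,
    sum_univ_erase_comp_equiv (w (e b))]

theorem stateMatrix_comp_equiv_pow_apply (w : V → V → ℝ) (e : W ≃ V) (k : ℕ) (a b : W) :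
    (stateMatrix (fun x y => w (e x) (e y)) ^ k) a b = (stateMatrix w ^ k) (e a) (e b) := by
  rw [stateMatrix_comp_equiv, submatrix_equiv_pow, Matrix.submatrix_apply]

end VertexRelabelling

theorem star_swap_indistinguishable_general
    {V : Type*} [Fintype V] [DecidableEq V] (σ : Equiv.Perm V) (c : V) (hc : σ c = c)
    (S : Set V) (hS : ∀ s ∈ S, σ s = s) (w : V → V → ℝ) :
    (∀ s ∈ S, ∀ k : ℕ,
      (stateMatrix w ^ k) s c = (stateMatrix (fun a b => w (σ a) (σ b)) ^ k) s c) ∧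
    ∀ u, w c u ≠ w c (σ u) → w ≠ fun a b => w (σ a) (σ b) := by
  refine ⟨fun s hs k => ?_, fun u hne heq => hne ?_⟩
  · rw [stateMatrix_comp_equiv_pow_apply, hS s hs, hc]
  · simpa only [hc] using congr_fun₂ heq c u

theorem star_swap_indistinguishable
    {V : Type*} [Fintype V] [DecidableEq V] (G : SimpleGraph V) (c : V)
    (hstar : ∀ a b : V, G.Adj a b ↔ (a = c ∧ b ≠ c) ∨ (b = c ∧ a ≠ c))
    (S : Set V) (u v : V) (hu : u ≠ c) (hv : v ≠ c) (huv : u ≠ v)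
    (huS : u ∉ S) (hvS : v ∉ S)
    (w : V → V → ℝ) (hw : IsWeightFn G w) :
    (∀ s ∈ S, ∀ k : ℕ,
      (stateMatrix w ^ k) s c =
        (stateMatrix (fun a b => w (Equiv.swap u v a) (Equiv.swap u v b)) ^ k) s c) ∧
    (w c u ≠ w c v →
      w ≠ fun a b => w (Equiv.swap u v a) (Equiv.swap u v b)) := by
  have hS : ∀ s ∈ S, Equiv.swap u v s = s := fun s hs =>
    Equiv.swap_apply_of_ne_of_ne (ne_of_mem_of_not_mem hs huS) (ne_of_mem_of_not_mem hs hvS)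
  simpa only [Equiv.swap_apply_left] using
    (star_swap_indistinguishable_general (Equiv.swap u v) c
      (Equiv.swap_apply_of_ne_of_ne hu.symm hv.symm) S hS w).imp_right (· u)
end
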